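/- Let φ, ψ ∈ Diff_c(ℝ²,ω₀). Then the Calabi invariant is additive under composition: CAL(ψ∘φ) = CAL(ψ) + CAL(φ). In other words, CAL : Diff_c(ℝ²,ω₀) → ℝ is a group homomorphism. -/

import Mathlib

open MeasureTheory

noncomputable section

/-- The standard area form `ω₀ = dx ∧ dy` on `ℝ²`, as a bilinear pairing. -/
def omega0 (u v : ℝ × ℝ) : ℝ := u.1 * v.2 - u.2 * v.1

/-- A 1-form on `ℝ²`, encoded as a map into the continuous linear functionals. -/
abbrev OneForm := (ℝ × ℝ) → ((ℝ × ℝ) →L[ℝ] ℝ)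

/-- `l` is a smooth primitive of `ω₀`: a smooth 1-form with `dl = ω₀`. -/
def IsPrimitive (l : OneForm) : Prop :=
  ContDiff ℝ (⊤ : ℕ∞) l ∧ ∀ z u v, fderiv ℝ l z u v - fderiv ℝ l z v u = omega0 u v

/-- Pullback of a 1-form by a map: `(f*l)(z) = l (f z) ∘ Df(z)`. -/
def pullbackForm (f : ℝ × ℝ → ℝ × ℝ) (l : OneForm) : OneForm :=
  fun z => (l (f z)).comp (fderiv ℝ f z)

/-- The group `Diff_c(ℝ², ω₀)` of smooth, compactly supported, area-preserving
diffeomorphisms of the plane. -/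
structure DiffC where
  toFun : ℝ × ℝ → ℝ × ℝ
  invFun : ℝ × ℝ → ℝ × ℝ
  smooth : ContDiff ℝ (⊤ : ℕ∞) toFun
  smooth_inv : ContDiff ℝ (⊤ : ℕ∞) invFun
  left_inv : Function.LeftInverse invFun toFun
  right_inv : Function.RightInverse invFun toFun
  area : ∀ z u v, omega0 (fderiv ℝ toFun z u) (fderiv ℝ toFun z v) = omega0 u v
  compact : ∃ K : Set (ℝ × ℝ), IsCompact K ∧ ∀ z ∉ K, toFun z = z

/-- `σ` is the action of `f` with respect to the primitive `l`: the unique compactly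
supported smooth function with `dσ = f*l − l`. -/
def IsAction (f : ℝ × ℝ → ℝ × ℝ) (l : OneForm) (σ : ℝ × ℝ → ℝ) : Prop :=
  ContDiff ℝ (⊤ : ℕ∞) σ ∧ HasCompactSupport σ ∧
    ∀ z, fderiv ℝ σ z = pullbackForm f l z - l z

/-!
The actions satisfy a cocycle identity: since `(ψ ∘ φ)^*λ − λ = φ^*(ψ^*λ − λ) + (φ^*λ − λ)`, the
function `σ_ψ ∘ φ + σ_φ` is a primitive of the left-hand side. This function has compact support,
and a compactly supported function on a noncompact normed space is determined by its derivative, so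
it equals `σ_{ψ ∘ φ}`. Integrating, `φ` disappears from the first summand because it preserves area.
-/

open Filter Function

section Action

variable {E : Type*} [NormedAddCommGroup E] [NormedSpace ℝ E]

/-- `σ` is a primitive of `f^*l − l`, for a map `f` and a 1-form `l` on a normed space. This is the
action without smoothness or compact support; differentiability of `σ` is part of the notion. -/
def IsActionPrimitive (f : E → E) (l : E → E →L[ℝ] ℝ) (σ : E → ℝ) : Prop :=
  ∀ z, HasFDerivAt σ ((l (f z)).comp (fderiv ℝ f z) - l z) z

theorem IsAction.isActionPrimitive {f : ℝ × ℝ → ℝ × ℝ} {l : OneForm} {σ : ℝ × ℝ → ℝ}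
    (h : IsAction f l σ) : IsActionPrimitive f l σ := fun z =>
  (h.1.differentiable (by simp) z).hasFDerivAt.congr_fderiv (h.2.2 z)

theorem IsAction.hasCompactSupport {f : ℝ × ℝ → ℝ × ℝ} {l : OneForm} {σ : ℝ × ℝ → ℝ}
    (h : IsAction f l σ) : HasCompactSupport σ :=
  h.2.1

namespace IsActionPrimitive

variable {φ ψ f : E → E} {l : E → E →L[ℝ] ℝ} {σ σφ σψ : E → ℝ}

theorem differentiable (h : IsActionPrimitive f l σ) : Differentiable ℝ σ := fun z =>
  (h z).differentiableAt

theorem comp (hψ : IsActionPrimitive ψ l σψ) (hφ : IsActionPrimitive φ l σφ)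
    (dψ : Differentiable ℝ ψ) (dφ : Differentiable ℝ φ) :
    IsActionPrimitive (ψ ∘ φ) l (σψ ∘ φ + σφ) := by
  intro z
  refine (((hψ (φ z)).comp z (dφ z).hasFDerivAt).add (hφ z)).congr_fderiv ?_
  rw [fderiv_comp z (dψ (φ z)) (dφ z), ContinuousLinearMap.sub_comp, sub_add_sub_cancel]
  rfl

theorem integrable [MeasurableSpace E] [OpensMeasurableSpace E] {μ : Measure E}
    [IsFiniteMeasureOnCompacts μ] (h : IsActionPrimitive f l σ) (hσ : HasCompactSupport σ) :
    Integrable σ μ :=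
  h.differentiable.continuous.integrable_of_hasCompactSupport hσ

end IsActionPrimitive

theorem hasCompactSupport_comp_of_tendsto_cocompact {X Y M : Type*} [TopologicalSpace X] [R1Space X]
    [TopologicalSpace Y] [Zero M] {g : Y → M} (hg : HasCompactSupport g) {f : X → Y}
    (hf : Tendsto f (cocompact X) (cocompact Y)) : HasCompactSupport (g ∘ f) := by
  rw [hasCompactSupport_iff_eventuallyEq] at hg ⊢
  rw [coclosedCompact_eq_cocompact]
  exact (hg.filter_mono cocompact_le_coclosedCompact).comp_tendsto hf

theorem eq_of_hasCompactSupport_of_fderiv_eq {𝕜 V W : Type*} [RCLike 𝕜] [NormedAddCommGroup V]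
    [NormedSpace 𝕜 V] [NoncompactSpace V] [NormedAddCommGroup W] [NormedSpace 𝕜 W] {f g : V → W}
    (hf : HasCompactSupport f) (hg : HasCompactSupport g) (df : Differentiable 𝕜 f)
    (dg : Differentiable 𝕜 g) (h : ∀ z, fderiv 𝕜 f z = fderiv 𝕜 g z) : f = g := by
  obtain ⟨z, hz⟩ := (Set.ne_univ_iff_exists_notMem _).1 (hf.isCompact.union hg.isCompact).ne_univ
  rw [Set.mem_union, not_or] at hz
  refine eq_of_fderiv_eq df dg h z ?_
  rw [image_eq_zero_of_notMem_tsupport hz.1, image_eq_zero_of_notMem_tsupport hz.2]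

theorem IsActionPrimitive.eq_comp_add [Nontrivial E] {φ ψ : E → E} {l : E → E →L[ℝ] ℝ}
    {σφ σψ σc : E → ℝ} (hc : IsActionPrimitive (ψ ∘ φ) l σc) (hψ : IsActionPrimitive ψ l σψ)
    (hφ : IsActionPrimitive φ l σφ) (dψ : Differentiable ℝ ψ) (dφ : Differentiable ℝ φ)
    (φ_proper : Tendsto φ (cocompact E) (cocompact E)) (cc : HasCompactSupport σc)
    (cψ : HasCompactSupport σψ) (cφ : HasCompactSupport σφ) : σc = σψ ∘ φ + σφ := by
  have hcomp := hψ.comp hφ dψ dφ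
  exact eq_of_hasCompactSupport_of_fderiv_eq cc
    ((hasCompactSupport_comp_of_tendsto_cocompact cψ φ_proper).add cφ)
    hc.differentiable hcomp.differentiable fun z => (hc z).fderiv.trans (hcomp z).fderiv.symm

theorem statement8_general [Nontrivial E] [MeasurableSpace E] [OpensMeasurableSpace E]
    {μ : Measure E} [IsFiniteMeasureOnCompacts μ] {φ ψ : E → E} {l : E → E →L[ℝ] ℝ}
    {σφ σψ σc : E → ℝ} (dφ : Differentiable ℝ φ)
    (φ_proper : Tendsto φ (cocompact E) (cocompact E)) (φ_preserves : MeasurePreserving φ μ μ)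
    (dψ : Differentiable ℝ ψ) (hφ : IsActionPrimitive φ l σφ) (cφ : HasCompactSupport σφ)
    (hψ : IsActionPrimitive ψ l σψ) (cψ : HasCompactSupport σψ)
    (hc : IsActionPrimitive (ψ ∘ φ) l σc) (cc : HasCompactSupport σc) :
    ∫ z, σc z ∂μ = (∫ z, σψ z ∂μ) + ∫ z, σφ z ∂μ := by
  have iψ : Integrable σψ μ := hψ.integrable cψ
  have integral_pullback : ∫ z, σψ (φ z) ∂μ = ∫ z, σψ z ∂μ := by
    rw [← integral_map φ_preserves.aemeasurable (φ_preserves.map_eq.symm ▸ iψ.1),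
      φ_preserves.map_eq]
  calc
    ∫ z, σc z ∂μ = ∫ z, (σψ (φ z) + σφ z) ∂μ := by
      rw [hc.eq_comp_add hψ hφ dψ dφ φ_proper cc cψ cφ]
      rfl
    _ = (∫ z, σψ (φ z) ∂μ) + ∫ z, σφ z ∂μ :=
      integral_add (φ_preserves.integrable_comp_of_integrable iψ) (hφ.integrable cφ)
    _ = (∫ z, σψ z ∂μ) + ∫ z, σφ z ∂μ := by rw [integral_pullback]

end Action

theorem measurePreserving_of_abs_det_fderiv_eq_one {E : Type*} [NormedAddCommGroup E]
    [NormedSpace ℝ E] [FiniteDimensional ℝ E] [MeasurableSpace E] [BorelSpace E] (μ : Measure E)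
    [μ.IsAddHaarMeasure] {f : E → E} (hf : Differentiable ℝ f) (hbij : Bijective f)
    (hdet : ∀ z, |(fderiv ℝ f z).det| = 1) : MeasurePreserving f μ μ := by
  refine ⟨hf.continuous.measurable, ?_⟩
  have change_of_variables := map_withDensity_abs_det_fderiv_eq_addHaar μ
    MeasurableSet.univ.nullMeasurableSet (fun z _ => (hf z).hasFDerivAt.hasFDerivWithinAt)
    hbij.injective.injOn
  simpa [hdet, hbij.surjective.range_eq, withDensity_const] using change_of_variables

theorem omega0_map_map (L : (ℝ × ℝ) →L[ℝ] ℝ × ℝ) (u v : ℝ × ℝ) :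
    omega0 (L u) (L v) = L.det * omega0 u v := by
  have L_apply (w : ℝ × ℝ) : L w = w.1 • L (1, 0) + w.2 • L (0, 1) := by
    rw [← map_smul, ← map_smul, ← map_add]
    simp
  have det_eq : L.det = (L (1, 0)).1 * (L (0, 1)).2 - (L (0, 1)).1 * (L (1, 0)).2 := by
    rw [ContinuousLinearMap.det, ← LinearMap.det_toMatrix (Module.Basis.finTwoProd ℝ),
      Matrix.det_fin_two]
    simp [LinearMap.toMatrix_apply]
  rw [L_apply u, L_apply v, det_eq]
  simp only [omega0, Prod.fst_add, Prod.snd_add, Prod.smul_fst, Prod.smul_snd, smul_eq_mul]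
  ring

namespace DiffC

variable (φ : DiffC)

theorem differentiable : Differentiable ℝ φ.toFun :=
  φ.smooth.differentiable (by simp)

theorem bijective : Bijective φ.toFun :=
  ⟨φ.left_inv.injective, φ.right_inv.surjective⟩

theorem tendsto_cocompact : Tendsto φ.toFun (cocompact (ℝ × ℝ)) (cocompact (ℝ × ℝ)) := by
  obtain ⟨K, hK, φ_eq_id⟩ := φ.compact
  exact tendsto_id.congr' <|
    mem_of_superset hK.compl_mem_cocompact fun z hz => (φ_eq_id z hz).symm

theorem det_fderiv (z : ℝ × ℝ) : (fderiv ℝ φ.toFun z).det = 1 := by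
  have area := φ.area z (1, 0) (0, 1)
  rw [omega0_map_map] at area
  simpa [omega0] using area

theorem measurePreserving : MeasurePreserving φ.toFun :=
  measurePreserving_of_abs_det_fderiv_eq_one volume φ.differentiable φ.bijective fun z => by
    rw [φ.det_fderiv, abs_one]

end DiffC

/-- The Calabi invariant is additive under composition:
`CAL(ψ∘φ) = CAL(ψ) + CAL(φ)`. -/
theorem statement8 (φ ψ : DiffC) (l : OneForm) (hl : IsPrimitive l)
    (σφ σψ σc : ℝ × ℝ → ℝ)
    (hφ : IsAction φ.toFun l σφ) (hψ : IsAction ψ.toFun l σψ)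
    (hc : IsAction (ψ.toFun ∘ φ.toFun) l σc) :
    ∫ z : ℝ × ℝ, σc z = (∫ z : ℝ × ℝ, σψ z) + ∫ z : ℝ × ℝ, σφ z :=
  statement8_general φ.differentiable φ.tendsto_cocompact φ.measurePreserving ψ.differentiable
    hφ.isActionPrimitive hφ.hasCompactSupport hψ.isActionPrimitive hψ.hasCompactSupport
    hc.isActionPrimitive hc.hasCompactSupport
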